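/- Let R be a commutative coherent ring in which every injective R-module is flat (i.e., R is an IF-ring, equivalently the Gorenstein weak global dimension of R is 0), and let G be a finite abelian group whose order is invertible in R. Then the group ring RG is a coherent ring in which every injective RG-module is flat, and the global cotorsion dimensions of R and RG coincide: for every nonnegative integer n, every flat RG-module has projective dimension at most n over RG if and only if every flat R-module has projective dimension at most n over R. (Consequently G-wdim(RG) = 0 and G-gldim(RG) = G-gldim(R).) -/

import Mathlib

open CategoryTheory

noncomputable section

universe u

/-- The `j`-th Ext group of the `R`-modules `M` and `N`. -/
def extGroup (R : Type u) [CommRing R] (M N : ModuleCat.{u} R) (j : ℕ) : ModuleCat R :=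
  ((Ext R (ModuleCat.{u} R) j).obj (Opposite.op M)).obj N

/-- `Ext_R^j(M, N) = 0`. -/
def ExtVanish (R : Type u) [CommRing R] (M N : ModuleCat.{u} R) (j : ℕ) : Prop :=
  Subsingleton (extGroup R M N j)

/-- The projective dimension of `M` is at most `n`
(via the standard Ext-vanishing characterization). -/
def ProjDimLE (R : Type u) [CommRing R] (M : ModuleCat.{u} R) (n : ℕ) : Prop :=
  ∀ (N : ModuleCat.{u} R) (j : ℕ), n < j → ExtVanish R M N j

/-- `M` has finite projective dimension. -/
def HasFinProjDim (R : Type u) [CommRing R] (M : ModuleCat.{u} R) : Prop :=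
  ∃ n, ProjDimLE R M n

/-- `R` is a coherent ring: every finitely generated ideal is finitely presented. -/
def IsCoherentRing (R : Type u) [CommRing R] : Prop :=
  ∀ I : Ideal R, I.FG → Module.FinitePresentation R I

/-!
A group algebra `S = RG` with `|G|` invertible is a finite projective `R`-algebra with `R` as a
direct summand through the augmentation `ε`, and it is unramified: its separability idempotent is
`|G|⁻¹ ∑ g ⊗ g⁻¹`. Any such `S` inherits coherence because its finitely generated ideals are
submodules of some `Rⁿ`. The idempotent makes every `S`-module a retract of `S ⊗ M`, the base change
of its restriction, and `ε` makes every `R`-module a retract of the restriction of its base change.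
Base change and restriction are exact and preserve projectives, and restriction also preserves
injectives, so flatness of injectives passes to `S` and bounds on the projective dimension of flat
modules pass in both directions.
-/

open TensorProduct

/-- A module all of whose finitely generated submodules are finitely presented, in the terminology
of Bourbaki. A coherent ring is one that is pseudo-coherent as a module over itself. -/
def IsPseudoCoherent (R M : Type*) [Ring R] [AddCommGroup M] [Module R M] : Prop :=
  ∀ N : Submodule R M, N.FG → Module.FinitePresentation R N

namespace IsPseudoCoherent

variable {R M M' : Type*} [Ring R] [AddCommGroup M] [Module R M] [AddCommGroup M'] [Module R M']

theorem finitePresentation_of_injective (hM' : IsPseudoCoherent R M') [Module.Finite R M]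
    (f : M →ₗ[R] M') (hf : Function.Injective f) : Module.FinitePresentation R M :=
  have : Module.FinitePresentation R f.range := hM' f.range (Module.Finite.iff_fg.1 inferInstance)
  .of_equiv (LinearEquiv.ofInjective f hf).symm

theorem of_injective (hM' : IsPseudoCoherent R M') (f : M →ₗ[R] M') (hf : Function.Injective f) :
    IsPseudoCoherent R M := fun N hN ↦
  have : Module.Finite R N := .of_fg hN
  hM'.finitePresentation_of_injective (f ∘ₗ N.subtype) (hf.comp N.injective_subtype)

theorem of_ker (l : M →ₗ[R] M') (hker : IsPseudoCoherent R l.ker) (hM' : IsPseudoCoherent R M') :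
    IsPseudoCoherent R M := by
  intro N hN
  let q : N →ₗ[R] N.map l := l.submoduleMap N
  have hq : Function.Surjective q := l.submoduleMap_surjective N
  have : Module.Finite R N := .of_fg hN
  have : Module.FinitePresentation R (N.map l) := hM' _ (hN.map l)
  have : Module.Finite R q.ker := .of_fg (Module.FinitePresentation.fg_ker q hq)
  have : Module.FinitePresentation R q.ker :=
    hker.finitePresentation_of_injective
      ((N.subtype ∘ₗ q.ker.subtype).codRestrict l.ker fun x ↦ congrArg Subtype.val x.2)
      fun x y hxy ↦ Subtype.ext (Subtype.ext (congrArg (fun z : l.ker ↦ (z : M)) hxy))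
  exact Module.finitePresentation_of_ker q hq

theorem pi_fin (hR : IsPseudoCoherent R R) (n : ℕ) : IsPseudoCoherent R (Fin n → R) := by
  induction n with
  | zero => exact fun N _ ↦ inferInstance
  | succ n ih =>
    let tail : (Fin (n + 1) → R) →ₗ[R] Fin n → R := LinearMap.funLeft R R Fin.succ
    let head : (Fin (n + 1) → R) →ₗ[R] R := LinearMap.proj 0
    refine of_ker head (ih.of_injective (tail ∘ₗ head.ker.subtype) ?_) hR
    refine (injective_iff_map_eq_zero _).2 fun x htail ↦ Subtype.ext (funext fun i ↦ ?_)
    exact Fin.cases x.2 (congrFun htail) i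

theorem of_finite_of_projective (hR : IsPseudoCoherent R R) [Module.Finite R M]
    [Module.Projective R M] : IsPseudoCoherent R M := by
  obtain ⟨n, f, g, -, hg, -⟩ := Module.Finite.exists_comp_eq_id_of_projective R M
  exact (hR.pi_fin n).of_injective g hg

end IsPseudoCoherent

theorem finitePresentation_of_restrictScalars (R S M : Type*) [CommRing R] [Ring S]
    [Algebra R S] [AddCommGroup M] [Module R M] [Module S M] [IsScalarTower R S M]
    [Module.Finite R S] [Module.FinitePresentation R M] : Module.FinitePresentation S M := by
  have : Module.Finite S M := .of_restrictScalars_finite R S M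
  obtain ⟨n, l, hl⟩ := Module.Finite.exists_fin' S M
  refine Module.finitePresentation_of_surjective l hl ?_
  have hker : (l.restrictScalars R).ker.FG := Module.FinitePresentation.fg_ker _ hl
  exact Submodule.FG.of_restrictScalars (R := R) (LinearMap.ker_restrictScalars (R := R) l ▸ hker)

theorem IsCoherentRing.of_finite_of_projective {R : Type u} (S : Type u) [CommRing R] [CommRing S]
    [Algebra R S] [Module.Finite R S] [Module.Projective R S] (hR : IsCoherentRing R) :
    IsCoherentRing S := by
  intro I hI
  have : Module.Finite S I := .of_fg hI
  have : Module.Finite R I := .trans S I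
  have : Module.FinitePresentation R I :=
    (IsPseudoCoherent.of_finite_of_projective (M := S) hR).finitePresentation_of_injective
      (I.subtype.restrictScalars R) I.injective_subtype
  exact finitePresentation_of_restrictScalars R S I

theorem injective_restrictScalars {R S M : Type u} [CommRing R] [CommRing S] [Algebra R S]
    [AddCommGroup M] [Module R M] [Module S M] [IsScalarTower R S M] [Module.Flat R S]
    [hM : Module.Injective S M] : Module.Injective R M := by
  refine ⟨fun X Y _ _ _ _ f hf g ↦ ?_⟩
  obtain ⟨k, hk⟩ := hM.out (f.baseChange S)
    (Module.Flat.lTensor_preserves_injective_linearMap (M := S) f hf) (g.liftBaseChange S)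
  refine ⟨k.restrictScalars R ∘ₗ (TensorProduct.mk R S Y 1), fun x ↦ ?_⟩
  simpa using hk (1 ⊗ₜ x)

section ProjectiveDimension

theorem isZero_Ext_succ_iff_subsingleton {R C : Type*} [Ring R] [Category* C] [Abelian C]
    [Linear R C] [EnoughProjectives C] [HasExt C] (X Y : C) (n : ℕ) :
    Limits.IsZero (((Ext R C (n + 1)).obj (Opposite.op X)).obj Y) ↔
      Subsingleton (Abelian.Ext X Y (n + 1)) := by
  let P := ProjectiveResolution.of X
  have hExt : Limits.IsZero (((Ext R C (n + 1)).obj (Opposite.op X)).obj Y) ↔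
      ∀ f : P.complex.X (n + 1) ⟶ Y, P.complex.d (n + 2) (n + 1) ≫ f = 0 →
        ∃ g : P.complex.X n ⟶ Y, P.complex.d (n + 1) n ≫ g = f := by
    rw [(P.isoExt (R := R) (n + 1) Y).isZero_iff, ← HomologicalComplex.exactAt_iff_isZero_homology,
      HomologicalComplex.exactAt_iff' _ n (n + 1) (n + 2) (by simp) (by simp),
      ShortComplex.moduleCat_exact_iff]
    rfl
  rw [hExt]
  refine ⟨fun h ↦ subsingleton_of_forall_eq 0 fun α ↦ ?_, fun h f hf ↦ ?_⟩
  · obtain ⟨f, hf, rfl⟩ := P.extMk_surjective α (n + 2) rfl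
    exact (P.extMk_eq_zero_iff f _ rfl hf n rfl).2 (h f hf)
  · exact (P.extMk_eq_zero_iff f _ rfl hf n rfl).1 (Subsingleton.elim _ _)

theorem projDimLE_iff_hasProjectiveDimensionLE {R : Type u} [CommRing R] (M : ModuleCat.{u} R)
    (n : ℕ) : ProjDimLE R M n ↔ HasProjectiveDimensionLE M n := by
  have hvanish (N : ModuleCat.{u} R) (j : ℕ) :
      ExtVanish R M N (j + 1) ↔ Subsingleton (Abelian.Ext M N (j + 1)) := by
    rw [← isZero_Ext_succ_iff_subsingleton (R := R), ModuleCat.isZero_iff_subsingleton]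
    rfl
  refine ⟨fun h ↦ .mk ?_, ?_⟩
  · rintro (_ | j) hj N e
    · lia
    · exact ((hvanish N j).1 (h N _ hj)).elim _ _
  · rintro h N (_ | j) hj
    · lia
    · exact (hvanish N j).2 (h.subsingleton M _ _ hj N)

theorem hasProjectiveDimensionLE_zero_iff {R M : Type u} [Ring R] [AddCommGroup M]
    [Module R M] : HasProjectiveDimensionLE (ModuleCat.of R M) 0 ↔ Module.Projective R M :=
  (projective_iff_hasProjectiveDimensionLE_zero _).symm.trans
    (IsProjective.iff_projective (ModuleCat.of R M)).symm

theorem hasProjectiveDimensionLE_succ_iff {R K P M : Type u} [Ring R] [AddCommGroup K]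
    [Module R K] [AddCommGroup P] [Module R P] [AddCommGroup M] [Module R M]
    [Module.Projective R P] {f : K →ₗ[R] P} {g : P →ₗ[R] M} (hf : Function.Injective f)
    (hfg : Function.Exact f g) (hg : Function.Surjective g) (n : ℕ) :
    HasProjectiveDimensionLE (ModuleCat.of R M) (n + 1) ↔
      HasProjectiveDimensionLE (ModuleCat.of R K) n := by
  let T := ShortComplex.mk (ModuleCat.ofHom f) (ModuleCat.ofHom g)
    (ModuleCat.hom_ext hfg.linearMap_comp_eq_zero)
  have hT : T.ShortExact :=
    { exact := (ShortComplex.ShortExact.moduleCat_exact_iff_function_exact T).2 hfg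
      mono_f := (ModuleCat.mono_iff_injective _).2 hf
      epi_g := (ModuleCat.epi_iff_surjective _).2 hg }
  exact hT.hasProjectiveDimensionLT_X₃_iff n
    ((IsProjective.iff_projective (ModuleCat.of R P)).1 inferInstance)

theorem exists_projective_shortExact (R M : Type u) [Ring R] [AddCommGroup M] [Module R M] :
    ∃ (K P : ModuleCat.{u} R) (f : K →ₗ[R] P) (g : P →ₗ[R] M), Module.Projective R P ∧
      Function.Injective f ∧ Function.Exact f g ∧ Function.Surjective g :=
  let g : (M →₀ R) →ₗ[R] M := Finsupp.linearCombination R id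
  ⟨.of R g.ker, .of R (M →₀ R), g.ker.subtype, g, inferInstanceAs (Module.Projective R (M →₀ R)),
    g.ker.injective_subtype, g.exact_subtype_ker_map, Finsupp.linearCombination_id_surjective R M⟩

theorem hasProjectiveDimensionLE_of_comp_eq_id {R M N : Type u} [Ring R] [AddCommGroup M]
    [Module R M] [AddCommGroup N] [Module R N] (i : M →ₗ[R] N) (r : N →ₗ[R] M)
    (hri : r ∘ₗ i = .id) {n : ℕ} [HasProjectiveDimensionLE (ModuleCat.of R N) n] :
    HasProjectiveDimensionLE (ModuleCat.of R M) n :=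
  let h : Retract (ModuleCat.of R M) (ModuleCat.of R N) :=
    ⟨ModuleCat.ofHom i, ModuleCat.ofHom r, ModuleCat.hom_ext hri⟩
  h.hasProjectiveDimensionLT (n + 1)

theorem projective_restrictScalars {R S M : Type*} [CommRing R] [Ring S] [Algebra R S]
    [AddCommGroup M] [Module R M] [Module S M] [IsScalarTower R S M] [Module.Projective R S]
    [hM : Module.Projective S M] : Module.Projective R M := by
  classical
  obtain ⟨s, hs⟩ := hM.out
  have : Module.Projective R (M →₀ S) := .of_equiv (finsuppLequivDFinsupp (M := S) R).symm
  exact .of_split (s.restrictScalars R) ((Finsupp.linearCombination S id).restrictScalars R)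
    (LinearMap.ext hs)

variable {R S : Type u} [CommRing R] [CommRing S] [Algebra R S]

theorem hasProjectiveDimensionLE_baseChange [Module.Flat R S] (M : Type u) [AddCommGroup M]
    [Module R M] {n : ℕ} (hM : HasProjectiveDimensionLE (ModuleCat.of R M) n) :
    HasProjectiveDimensionLE (ModuleCat.of S (S ⊗[R] M)) n := by
  induction n generalizing M with
  | zero =>
    have : Module.Projective R M := hasProjectiveDimensionLE_zero_iff.1 hM
    exact hasProjectiveDimensionLE_zero_iff.2 inferInstance
  | succ n ih =>
    obtain ⟨K, P, f, g, _, hf, hfg, hg⟩ := exists_projective_shortExact R M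
    have hK := (hasProjectiveDimensionLE_succ_iff hf hfg hg n).1 hM
    have hf' : Function.Injective (f.baseChange S) :=
      Module.Flat.lTensor_preserves_injective_linearMap f hf
    have hfg' : Function.Exact (f.baseChange S) (g.baseChange S) := lTensor_exact S hfg hg
    have hg' : Function.Surjective (g.baseChange S) := g.lTensor_surjective S hg
    exact (hasProjectiveDimensionLE_succ_iff hf' hfg' hg' n).2 (ih K hK)

theorem hasProjectiveDimensionLE_restrictScalars [Module.Projective R S] (M : Type u)
    [AddCommGroup M] [Module R M] [Module S M] [IsScalarTower R S M] {n : ℕ}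
    (hM : HasProjectiveDimensionLE (ModuleCat.of S M) n) :
    HasProjectiveDimensionLE (ModuleCat.of R M) n := by
  induction n generalizing M with
  | zero =>
    have : Module.Projective S M := hasProjectiveDimensionLE_zero_iff.1 hM
    exact hasProjectiveDimensionLE_zero_iff.2 (projective_restrictScalars (S := S))
  | succ n ih =>
    obtain ⟨K, P, f, g, _, hf, hfg, hg⟩ := exists_projective_shortExact S M
    have hK := (hasProjectiveDimensionLE_succ_iff hf hfg hg n).1 hM
    let _ : Module R K := .restrictScalars R S K
    have : IsScalarTower R S K := .restrictScalars R S K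
    let _ : Module R P := .restrictScalars R S P
    have : IsScalarTower R S P := .restrictScalars R S P
    have : Module.Projective R P := projective_restrictScalars (S := S)
    exact (hasProjectiveDimensionLE_succ_iff (f := f.restrictScalars R)
      (g := g.restrictScalars R) hf hfg hg n).2 (ih K hK)

theorem hasProjectiveDimensionLE_of_restrictScalars [Module.Flat R S]
    [Algebra.FormallyUnramified R S] [Algebra.EssFiniteType R S] (M : Type u) [AddCommGroup M]
    [Module R M] [Module S M] [IsScalarTower R S M] {n : ℕ}
    (hM : HasProjectiveDimensionLE (ModuleCat.of R M) n) :
    HasProjectiveDimensionLE (ModuleCat.of S M) n :=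
  have := hasProjectiveDimensionLE_baseChange (S := S) M hM
  hasProjectiveDimensionLE_of_comp_eq_id (Algebra.FormallyUnramified.sec R S M)
    (TensorProduct.AlgebraTensorModule.lift
      ((Algebra.lsmul S S M).toLinearMap.flip.restrictScalars R).flip)
    (Algebra.FormallyUnramified.comp_sec R S M)

theorem hasProjectiveDimensionLE_of_baseChange [Module.Projective R S] (ε : S →ₗ[R] R)
    (hε : ε 1 = 1) (M : Type u) [AddCommGroup M] [Module R M] {n : ℕ}
    (hM : HasProjectiveDimensionLE (ModuleCat.of S (S ⊗[R] M)) n) :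
    HasProjectiveDimensionLE (ModuleCat.of R M) n :=
  have := hasProjectiveDimensionLE_restrictScalars (R := R) (S ⊗[R] M) hM
  hasProjectiveDimensionLE_of_comp_eq_id (TensorProduct.mk R S M 1)
    ((TensorProduct.lid R M).toLinearMap ∘ₗ ε.rTensor M) (by ext; simp [hε])

end ProjectiveDimension

theorem formallyUnramified_monoidAlgebra {R G : Type*} [CommRing R] [CommGroup G] [Fintype G]
    (hG : IsUnit (Fintype.card G : R)) : Algebra.FormallyUnramified R (MonoidAlgebra R G) := by
  obtain ⟨c, hc⟩ := hG.exists_left_inv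
  let e (g : G) : MonoidAlgebra R G ⊗[R] MonoidAlgebra R G :=
    MonoidAlgebra.of R G g ⊗ₜ[R] MonoidAlgebra.of R G g⁻¹
  have one_tmul_mul_sum (h : G) :
      (1 ⊗ₜ MonoidAlgebra.of R G h) * ∑ g, e g = (MonoidAlgebra.of R G h ⊗ₜ 1) * ∑ g, e g := by
    rw [Finset.mul_sum, Finset.mul_sum]
    refine Fintype.sum_equiv (Equiv.mulLeft h⁻¹) _ _ fun g ↦ ?_
    simp [e, -MonoidAlgebra.of_apply, ← map_mul, mul_comm]
  refine Algebra.FormallyUnramified.iff_exists_tensorProduct.2 ⟨c • ∑ g, e g, fun s ↦ ?_, ?_⟩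
  · induction s using MonoidAlgebra.induction_on with
    | of h => rw [mul_smul_comm, sub_mul, one_tmul_mul_sum, sub_self, smul_zero]
    | add x y hx hy =>
      rw [tmul_add, add_tmul, add_sub_add_comm, add_mul, hx, hy, add_zero]
    | smul a x hx => rw [tmul_smul, ← smul_tmul', ← smul_sub, smul_mul_assoc, hx, smul_zero]
  · have lmul_e (g : G) : Algebra.TensorProduct.lmul' R (e g) = 1 := by
      simp [e, -MonoidAlgebra.of_apply, ← map_mul]
    rw [map_smul, map_sum, Finset.sum_congr rfl fun g _ ↦ lmul_e g, Finset.sum_const,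
      Finset.card_univ, ← Nat.cast_smul_eq_nsmul R, smul_smul, hc, one_smul]

theorem stmt12_general (R S : Type u) [CommRing R] [CommRing S] [Algebra R S] [Module.Finite R S]
    [Module.Projective R S] [Algebra.FormallyUnramified R S] (ε : S →ₗ[R] R) (hε : ε 1 = 1) :
    (IsCoherentRing R → IsCoherentRing S) ∧
    ((∀ M : ModuleCat.{u} R, Module.Injective R M → Module.Flat R M) →
      ∀ M : ModuleCat.{u} S, Module.Injective S M → Module.Flat S M) ∧
    ∀ n : ℕ, (∀ F : ModuleCat.{u} S, Module.Flat S F → ProjDimLE S F n) ↔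
      ∀ F : ModuleCat.{u} R, Module.Flat R F → ProjDimLE R F n := by
  simp only [projDimLE_iff_hasProjectiveDimensionLE]
  refine ⟨.of_finite_of_projective S, fun hIF M hM ↦ ?_, fun n ↦ ⟨fun hS F hF ↦ ?_,
    fun hR F hF ↦ ?_⟩⟩
  · let _ : Module R M := .restrictScalars R S M
    have : IsScalarTower R S M := .restrictScalars R S M
    have : Module.Flat R M := hIF (.of R M) (injective_restrictScalars (S := S))
    exact Algebra.FormallyUnramified.flat_of_restrictScalars R S M
  · exact hasProjectiveDimensionLE_of_baseChange ε hε F (hS (.of S (S ⊗[R] F)) inferInstance)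
  · let _ : Module R F := .restrictScalars R S F
    have : IsScalarTower R S F := .restrictScalars R S F
    exact hasProjectiveDimensionLE_of_restrictScalars F (hR (.of R F) (.trans R S F))

theorem stmt12 (R : Type u) [CommRing R] (G : Type u) [CommGroup G] [Fintype G]
    (hcoh : IsCoherentRing R)
    (hIF : ∀ (M : ModuleCat.{u} R), Module.Injective R M → Module.Flat R M)
    (hord : IsUnit ((Fintype.card G : R))) :
    IsCoherentRing (MonoidAlgebra R G) ∧
    (∀ (M : ModuleCat.{u} (MonoidAlgebra R G)),
      Module.Injective (MonoidAlgebra R G) M → Module.Flat (MonoidAlgebra R G) M) ∧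
    (∀ n : ℕ,
      (∀ (F : ModuleCat.{u} (MonoidAlgebra R G)), Module.Flat (MonoidAlgebra R G) F →
        ProjDimLE (MonoidAlgebra R G) F n) ↔
      (∀ (F : ModuleCat.{u} R), Module.Flat R F → ProjDimLE R F n)) := by
  have := formallyUnramified_monoidAlgebra hord
  exact (stmt12_general R (MonoidAlgebra R G) (MonoidAlgebra.lift R R G 1).toLinearMap
    (by simp)).imp (· hcoh) (And.imp_left (· hIF))

end
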